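/- arXiv:2407.17768 — 2 statements merged into one kernel-verified Lean document; each statement's English description precedes it below -/
import Mathlib

section
/- Let (Ȳ_t)_{t∈[0,T]} be a mean-continuous family of Ê-integrable random variables with l_T ≤ Ê[ħ(T, Ȳ_T)] ≤ u_T. Then there exists a unique solution (Y, R) = BSP̂_l^u(Ȳ, ħ) of the backward Skorokhod problem with sublinear expectation; equivalently, there is exactly one continuous function R : [0,T] → ℝ of bounded variation with R_0 = 0 such that, setting Y_t := Ȳ_t + R_T − R_t, one has l_t ≤ Ê[ħ(t, Y_t)] ≤ u_t for all t ∈ [0,T] and the minimality condition holds. -/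
open MeasureTheory Set Filter

/-- The sublinear expectation `Ê[X] = sup_{P ∈ Ps} ∫ X dP`. -/
noncomputable def sublinE {Ω : Type*} [MeasurableSpace Ω] (Ps : Set (Measure Ω)) (X : Ω → ℝ) : ℝ :=
  sSup ((fun P => ∫ ω, X ω ∂P) '' Ps)

/-- `X` is Ê-integrable: measurable, integrable w.r.t. each `P ∈ Ps`, and
`sup_{P ∈ Ps} ∫ |X| dP < ∞`. -/
def EIntegrable {Ω : Type*} [MeasurableSpace Ω] (Ps : Set (Measure Ω)) (X : Ω → ℝ) : Prop :=
  Measurable X ∧ (∀ P ∈ Ps, Integrable X P) ∧ ∃ M : ℝ, ∀ P ∈ Ps, (∫ ω, |X ω| ∂P) ≤ M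

/-- Assumption (H_r) on the barriers `l, u` and the running loss function `hb`,
with constants `0 < cl ≤ cu` and `Ch > 0`. -/
def HrAssumption {Ω : Type*} [MeasurableSpace Ω] (T cl cu Ch : ℝ)
    (l u : ℝ → ℝ) (hb : ℝ → Ω → ℝ → ℝ) : Prop :=
  0 < cl ∧ cl ≤ cu ∧ 0 < Ch ∧
  ContinuousOn l (Icc 0 T) ∧ ContinuousOn u (Icc 0 T) ∧
  (∃ M : ℝ, ∀ t ∈ Icc (0:ℝ) T, |l t| ≤ M ∧ |u t| ≤ M) ∧
  (∃ ε > 0, ∀ t ∈ Icc (0:ℝ) T, ε ≤ u t - l t) ∧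
  (∀ t y, Measurable fun ω => hb t ω y) ∧
  (∀ ε > 0, ∃ δ > 0, ∀ (ω : Ω) (t t' y y' : ℝ),
      |t - t'| + |y - y'| < δ → |hb t ω y - hb t' ω y'| < ε) ∧
  (∀ t ω, StrictMono (hb t ω)) ∧
  (∀ t ω y, |hb t ω y| ≤ Ch * (1 + |y|)) ∧
  (∀ t ω y y', cl * |y - y'| ≤ |hb t ω y - hb t ω y'| ∧
    |hb t ω y - hb t ω y'| ≤ cu * |y - y'|)

/-- `H̄(t, x, X) = Ê[hb(t, x + X − Ê[X])]`. -/
noncomputable def Hbar {Ω : Type*} [MeasurableSpace Ω] (Ps : Set (Measure Ω))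
    (hb : ℝ → Ω → ℝ → ℝ) (t x : ℝ) (X : Ω → ℝ) : ℝ :=
  sublinE Ps (fun ω => hb t ω (x + X ω - sublinE Ps X))

/-- A family `(S_t)_{t ∈ [0,T]}` of Ê-integrable random variables which is continuous in mean. -/
def MeanContinuous {Ω : Type*} [MeasurableSpace Ω] (Ps : Set (Measure Ω)) (T : ℝ)
    (S : ℝ → Ω → ℝ) : Prop :=
  (∀ t ∈ Icc (0:ℝ) T, EIntegrable Ps (S t)) ∧
  ∀ t ∈ Icc (0:ℝ) T,
    Tendsto (fun s => sublinE Ps fun ω => |S s ω - S t ω|) (nhdsWithin t (Icc 0 T)) (nhds 0)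

/-- The minimality (Skorokhod) condition in its equivalent increment form: `R` may only
increase on intervals where `φ` stays strictly below `u` and may only decrease on intervals
where `φ` stays strictly above `l`. -/
def MinimalityIncr (T : ℝ) (φ l u R : ℝ → ℝ) : Prop :=
  ∀ s t : ℝ, 0 ≤ s → s < t → t ≤ T →
    ((∀ v, s < v → v ≤ t → φ v < u v) → R s ≤ R t) ∧
    ((∀ v, s < v → v ≤ t → l v < φ v) → R t ≤ R s)

/-- `(Y, R)` solves the backward Skorokhod problem with sublinear expectation for the data
`(Ybar, hb, l, u)`. -/
def IsBSPsol {Ω : Type*} [MeasurableSpace Ω] (Ps : Set (Measure Ω)) (T : ℝ)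
    (hb : ℝ → Ω → ℝ → ℝ) (l u : ℝ → ℝ) (Ybar Y : ℝ → Ω → ℝ) (R : ℝ → ℝ) : Prop :=
  (∀ t ∈ Icc (0:ℝ) T, ∀ ω, Y t ω = Ybar t ω + R T - R t) ∧
  (∀ t ∈ Icc (0:ℝ) T, l t ≤ sublinE Ps (fun ω => hb t ω (Y t ω)) ∧
    sublinE Ps (fun ω => hb t ω (Y t ω)) ≤ u t) ∧
  ContinuousOn R (Icc 0 T) ∧ BoundedVariationOn R (Icc 0 T) ∧ R 0 = 0 ∧
  MinimalityIncr T (fun v => sublinE Ps (fun ω => hb v ω (Y v ω))) l u R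

/-- Deterministic two-barrier problem on `[s, m]`, solved backwards from `m`. -/
def DetSol (a b K : ℝ → ℝ) (s m : ℝ) : Prop :=
  ContinuousOn K (Icc s m) ∧ BoundedVariationOn K (Icc s m) ∧
  (∀ t ∈ Icc s m, a t ≤ K t ∧ K t ≤ b t) ∧
  ∀ p q, s ≤ p → p < q → q ≤ m →
    ((∀ v, p < v → v ≤ q → K v < b v) → K q ≤ K p) ∧
    ((∀ v, p < v → v ≤ q → a v < K v) → K p ≤ K q)

lemma bv_const_sub (c : ℝ) {K : ℝ → ℝ} {s : Set ℝ} (h : BoundedVariationOn K s) :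
    BoundedVariationOn (fun t => c - K t) s := by
  have hL : LipschitzWith 1 (fun x : ℝ => c - x) :=
    LipschitzWith.of_dist_le_mul fun x y => by
      rw [Real.dist_eq, Real.dist_eq, abs_sub_comm x y]; simp
  exact hL.comp_boundedVariationOn h

lemma DetSol.neg {a b K : ℝ → ℝ} {s m : ℝ}
    (h : DetSol (fun t => - b t) (fun t => - a t) K s m) :
    DetSol a b (fun t => - K t) s m := by
  obtain ⟨h1, h2, h3, h4⟩ := h
  refine ⟨h1.neg, ?_, ?_, ?_⟩
  · simpa using bv_const_sub 0 h2
  · intro t ht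
    have := h3 t ht
    constructor <;> linarith [this.1, this.2]
  · intro p q hp hpq hq
    have := h4 p q hp hpq hq
    constructor
    · intro hv
      have := this.2 (fun v hv1 hv2 => by linarith [hv v hv1 hv2])
      simpa using this
    · intro hv
      have := this.1 (fun v hv1 hv2 => by linarith [hv v hv1 hv2])
      simpa using this

lemma DetSol.glue {a b K₁ K₂ : ℝ → ℝ} {s m T : ℝ} (hsm : s ≤ m) (hmT : m ≤ T)
    (h1 : DetSol a b K₁ s m) (h2 : DetSol a b K₂ m T) (he : K₁ m = K₂ m) :
    ∃ K, DetSol a b K s T ∧ K T = K₂ T := by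
  let K : ℝ → ℝ := fun t => if t ≤ m then K₁ t else K₂ t
  have e1 : EqOn K K₁ (Icc s m) := fun t ht => by simp [K, ht.2]
  have e2 : EqOn K K₂ (Icc m T) := fun t ht => by
    rcases eq_or_lt_of_le ht.1 with h | h
    · subst h; simp [K, he]
    · simp [K, not_le.2 h]
  obtain ⟨a1, a2, a3, a4⟩ := h1
  obtain ⟨b1, b2, b3, b4⟩ := h2
  refine ⟨K, ⟨?_, ?_, ?_, ?_⟩, e2 ⟨hmT, le_rfl⟩⟩
  · rw [← Icc_union_Icc_eq_Icc hsm hmT]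
    exact (a1.congr e1).union_of_isClosed (b1.congr e2) isClosed_Icc isClosed_Icc
  · have := eVariationOn.Icc_add_Icc K (s := univ) hsm hmT (mem_univ _)
    simp only [univ_inter] at this
    unfold BoundedVariationOn at *
    rw [← this, eVariationOn.congr e1, eVariationOn.congr e2]
    exact ENNReal.add_ne_top.2 ⟨a2, b2⟩
  · intro t ht
    rcases le_total t m with h | h
    · rw [e1 ⟨ht.1, h⟩]; exact a3 t ⟨ht.1, h⟩
    · rw [e2 ⟨h, ht.2⟩]; exact b3 t ⟨h, ht.2⟩
  · have c1 : ∀ p q, s ≤ p → p < q → q ≤ m →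
        ((∀ v, p < v → v ≤ q → K v < b v) → K q ≤ K p) ∧
        ((∀ v, p < v → v ≤ q → a v < K v) → K p ≤ K q) := by
      intro p q hp hpq hq
      have := a4 p q hp hpq hq
      rw [e1 ⟨hp, hpq.le.trans hq⟩, e1 ⟨hp.trans hpq.le, hq⟩]
      refine ⟨fun h => this.1 fun v hv1 hv2 => ?_, fun h => this.2 fun v hv1 hv2 => ?_⟩
      · rw [← e1 ⟨hp.trans hv1.le, hv2.trans hq⟩]; exact h v hv1 hv2
      · rw [← e1 ⟨hp.trans hv1.le, hv2.trans hq⟩]; exact h v hv1 hv2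
    have c2 : ∀ p q, m ≤ p → p < q → q ≤ T →
        ((∀ v, p < v → v ≤ q → K v < b v) → K q ≤ K p) ∧
        ((∀ v, p < v → v ≤ q → a v < K v) → K p ≤ K q) := by
      intro p q hp hpq hq
      have := b4 p q hp hpq hq
      rw [e2 ⟨hp, hpq.le.trans hq⟩, e2 ⟨hp.trans hpq.le, hq⟩]
      refine ⟨fun h => this.1 fun v hv1 hv2 => ?_, fun h => this.2 fun v hv1 hv2 => ?_⟩
      · rw [← e2 ⟨hp.trans hv1.le, hv2.trans hq⟩]; exact h v hv1 hv2
      · rw [← e2 ⟨hp.trans hv1.le, hv2.trans hq⟩]; exact h v hv1 hv2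
    intro p q hp hpq hq
    rcases le_or_gt q m with hqm | hqm
    · exact c1 p q hp hpq hqm
    rcases le_or_gt m p with hpm | hpm
    · exact c2 p q hpm hpq hq
    have d1 := c1 p m hp hpm le_rfl
    have d2 := c2 m q le_rfl hqm hq
    constructor
    · intro h
      exact (d2.1 fun v hv1 hv2 => h v (hpm.trans hv1) hv2).trans
        (d1.1 fun v hv1 hv2 => h v hv1 (hv2.trans hqm.le))
    · intro h
      exact (d1.2 fun v hv1 hv2 => h v hv1 (hv2.trans hqm.le)).trans
        (d2.2 fun v hv1 hv2 => h v (hpm.trans hv1) hv2)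

/-- One step: only the lower barrier matters. -/
lemma piece_lower {a b : ℝ → ℝ} (ha : Continuous a) {s m k0 : ℝ} (hsm : s ≤ m)
    (hk : a m ≤ k0) (hkb : ∀ t ∈ Icc s m, k0 ≤ b t)
    (hab : ∀ t ∈ Icc s m, ∀ r ∈ Icc s m, a r ≤ b t) :
    ∃ K, DetSol a b K s m ∧ K m = k0 := by
  let M : ℝ → ℝ := fun t => sSup ((fun θ => a (t + θ * (m - t))) '' Icc (0:ℝ) 1)
  have hMc : Continuous M := by
    apply isCompact_Icc.continuous_sSup
    fun_prop
  have hM_ge : ∀ t r, t ≤ r → r ≤ m → a r ≤ M t := by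
    intro t r htr hrm
    apply le_csSup
    · exact (isCompact_Icc.image (by fun_prop)).bddAbove
    · rcases eq_or_lt_of_le (htr.trans hrm) with h | h
      · refine ⟨0, by simp, ?_⟩
        have : t = r := le_antisymm htr (h ▸ hrm)
        simp [this]
      · have h' : 0 < m - t := by linarith
        refine ⟨(r - t) / (m - t), ⟨by apply div_nonneg <;> linarith, ?_⟩, ?_⟩
        · rw [div_le_one h']; linarith
        · simp only
          rw [div_mul_cancel₀ _ h'.ne']; congr 1; ring
  have hM_ex : ∀ t, t ≤ m → ∃ r, t ≤ r ∧ r ≤ m ∧ M t = a r := by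
    intro t htm
    have hc : IsCompact ((fun θ => a (t + θ * (m - t))) '' Icc (0:ℝ) 1) :=
      isCompact_Icc.image (by fun_prop)
    obtain ⟨θ, hθ, h⟩ := hc.sSup_mem ((nonempty_Icc.2 zero_le_one).image _)
    refine ⟨t + θ * (m - t), ?_, ?_, h.symm⟩
    · nlinarith [hθ.1]
    · nlinarith [hθ.2]
  have hM_anti : ∀ p q, p ≤ q → q ≤ m → M q ≤ M p := by
    intro p q hpq hq
    obtain ⟨r, h1, h2, h3⟩ := hM_ex q hq
    rw [h3]; exact hM_ge p r (hpq.trans h1) h2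
  let K : ℝ → ℝ := fun t => max k0 (M t)
  have hKc : Continuous K := continuous_const.max hMc
  have hK_anti : ∀ p q, p ≤ q → q ≤ m → K q ≤ K p := fun p q hpq hq =>
    max_le_max le_rfl (hM_anti p q hpq hq)
  refine ⟨K, ⟨hKc.continuousOn, ?_, ?_, ?_⟩, ?_⟩
  · have hmono : MonotoneOn (fun t => 0 - K t) (Icc s m) := by
      intro p hp q hq hpq
      have := hK_anti p q hpq hq.2
      simp only; linarith
    have h1 : BoundedVariationOn (fun t => 0 - K t) (Icc s m) := by
      have := hmono.eVariationOn_eq (left_mem_Icc.2 hsm) (right_mem_Icc.2 hsm)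
      rw [inter_self] at this
      unfold BoundedVariationOn
      rw [this]; exact ENNReal.ofReal_ne_top
    simpa using bv_const_sub 0 h1
  · intro t ht
    refine ⟨(hM_ge t t le_rfl ht.2).trans (le_max_right _ _), max_le (hkb t ht) ?_⟩
    obtain ⟨r, h1, h2, h3⟩ := hM_ex t ht.2
    rw [h3]; exact hab t ht r ⟨ht.1.trans h1, h2⟩
  · intro p q hp hpq hq
    refine ⟨fun _ => hK_anti p q hpq.le hq, fun h => ?_⟩
    by_contra hcon
    push Not at hcon
    obtain ⟨w, hw, hKw⟩ := intermediate_value_Icc' hpq.le hKc.continuousOn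
      (show (K p + K q) / 2 ∈ Icc (K q) (K p) from ⟨by linarith, by linarith⟩)
    have hwp : p < w := by
      rcases eq_or_lt_of_le hw.1 with e | e
      · rw [← e] at hKw; linarith
      · exact e
    obtain ⟨r, h1, h2, h3⟩ := hM_ex w (hw.2.trans hq)
    have hk0 : k0 ≤ K q := le_max_left _ _
    have hMq : M q ≤ K q := le_max_right _ _
    have hMw : K w = M w := by
      rcases max_choice k0 (M w) with e | e
      · have : K w = k0 := e
        linarith
      · exact e
    have hrq : r ≤ q := by
      by_contra hh
      push Not at hh
      have := hM_ge q r hh.le h2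
      linarith
    have := h r (hwp.trans_le h1) hrq
    have := hK_anti w r h1 h2
    linarith
  · obtain ⟨r, h1, h2, h3⟩ := hM_ex m le_rfl
    have : r = m := le_antisymm h2 h1
    subst this
    simp [K, h3, hk]

lemma piece_upper {a b : ℝ → ℝ} (hb : Continuous b) {s m k0 : ℝ} (hsm : s ≤ m)
    (hk : k0 ≤ b m) (hkb : ∀ t ∈ Icc s m, a t ≤ k0)
    (hab : ∀ t ∈ Icc s m, ∀ r ∈ Icc s m, a t ≤ b r) :
    ∃ K, DetSol a b K s m ∧ K m = k0 := by
  obtain ⟨K, h1, h2⟩ := piece_lower (a := fun t => - b t) (b := fun t => - a t) hb.neg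
    (k0 := -k0) hsm (by linarith) (fun t ht => by linarith [hkb t ht])
    (fun t ht r hr => by linarith [hab t ht r hr])
  exact ⟨_, h1.neg, by simp [h2]⟩

lemma det_exists {a b : ℝ → ℝ} {T k0 : ℝ} (hT : 0 < T) (ha : Continuous a) (hb : Continuous b)
    (hab : ∀ t ∈ Icc 0 T, a t < b t) (hk : a T ≤ k0 ∧ k0 ≤ b T) :
    ∃ K, DetSol a b K 0 T ∧ K T = k0 := by
  obtain ⟨t0, ht0, hmin⟩ := isCompact_Icc.exists_isMinOn (nonempty_Icc.2 hT.le)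
    ((hb.sub ha).continuousOn (s := Icc 0 T))
  obtain ⟨g, hgdef⟩ : ∃ g, g = b t0 - a t0 := ⟨_, rfl⟩
  have hg : 0 < g := by linarith [hab t0 ht0]
  have hgap : ∀ t ∈ Icc 0 T, g ≤ b t - a t := fun t ht => by
    have := hmin ht
    simpa [hgdef] using this
  have ua := isCompact_Icc.uniformContinuousOn_of_continuous (ha.continuousOn (s := Icc 0 T))
  have ub := isCompact_Icc.uniformContinuousOn_of_continuous (hb.continuousOn (s := Icc 0 T))
  rw [Metric.uniformContinuousOn_iff] at ua ub
  obtain ⟨d1, hd1, ua⟩ := ua (g / 4) (by linarith)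
  obtain ⟨d2, hd2, ub⟩ := ub (g / 4) (by linarith)
  obtain ⟨d, hd, hdd1, hdd2⟩ : ∃ d, 0 < d ∧ d < d1 ∧ d < d2 :=
    ⟨min d1 d2 / 2, by positivity,
      by linarith [min_le_left d1 d2, lt_min hd1 hd2],
      by linarith [min_le_right d1 d2, lt_min hd1 hd2]⟩
  have step : ∀ s m, 0 ≤ s → s ≤ m → m ≤ T → m - s ≤ d →
      (∃ K, DetSol a b K m T ∧ K T = k0) → ∃ K, DetSol a b K s T ∧ K T = k0 := by
    rintro s m hs hsm hmT hms ⟨K, hK, hKT⟩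
    have hKm := hK.2.2.1 m ⟨le_rfl, hmT⟩
    have hm : m ∈ Icc 0 T := ⟨hs.trans hsm, hmT⟩
    have oa : ∀ t ∈ Icc s m, |a t - a m| < g / 4 := fun t ht =>
      ua t ⟨hs.trans ht.1, ht.2.trans hmT⟩ m hm (by
        rw [Real.dist_eq, abs_lt]; constructor <;> linarith [ht.1, ht.2])
    have ob : ∀ t ∈ Icc s m, |b t - b m| < g / 4 := fun t ht =>
      ub t ⟨hs.trans ht.1, ht.2.trans hmT⟩ m hm (by
        rw [Real.dist_eq, abs_lt]; constructor <;> linarith [ht.1, ht.2])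
    have hgm := hgap m hm
    have hh : ∀ t ∈ Icc s m, ∀ r ∈ Icc s m, a r ≤ b t := fun t ht r hr => by
      have := abs_lt.1 (oa r hr)
      have := abs_lt.1 (ob t ht)
      linarith
    have : ∃ K', DetSol a b K' s m ∧ K' m = K m := by
      rcases le_total (K m) (a m + g / 2) with hc | hc
      · refine piece_lower ha hsm hKm.1 (fun t ht => ?_) hh
        have := abs_lt.1 (ob t ht)
        linarith
      · refine piece_upper hb hsm hKm.2 (fun t ht => ?_) (fun t ht r hr => hh r hr t ht)
        have := abs_lt.1 (oa t ht)
        linarith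
    obtain ⟨K', h1, h2⟩ := this
    obtain ⟨K'', h3, h4⟩ := DetSol.glue hsm hmT h1 hK h2
    exact ⟨K'', h3, h4.trans hKT⟩
  have ind : ∀ n : ℕ, ∃ K, DetSol a b K (max 0 (T - n * d)) T ∧ K T = k0 := by
    intro n
    induction n with
    | zero =>
      refine ⟨fun _ => k0, ⟨continuousOn_const, ?_, ?_, ?_⟩, rfl⟩
      · apply BoundedVariationOn.of_subsingleton
        simp [max_eq_right hT.le]
      · intro t ht
        simp only [CharP.cast_eq_zero, zero_mul, sub_zero, max_eq_right hT.le] at ht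
        have : t = T := le_antisymm ht.2 ht.1
        subst this; exact hk
      · intro p q _ _ _
        simp
    | succ n ih =>
      refine step _ _ (le_max_left _ _) ?_ (max_le hT.le ?_) ?_ ih
      · apply max_le_max le_rfl
        push_cast; nlinarith
      · have : 0 ≤ (n : ℝ) * d := by positivity
        linarith
      · push_cast
        rw [sub_le_iff_le_add]
        apply max_le
        · linarith [le_max_left 0 (T - (n + 1) * d)]
        · linarith [le_max_right 0 (T - (n + 1) * d)]
  obtain ⟨n, hn⟩ := exists_nat_ge (T / d)
  obtain ⟨K, hK⟩ := ind n
  rw [div_le_iff₀ hd] at hn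
  rw [max_eq_left (by linarith)] at hK
  exact ⟨K, hK⟩

lemma det_le {a b K K' : ℝ → ℝ} {T : ℝ} (h : DetSol a b K 0 T) (h' : DetSol a b K' 0 T)
    (hT : K T = K' T) : ∀ t ∈ Icc 0 T, K t ≤ K' t := by
  intro p hp
  by_contra hcon
  push Not at hcon
  let S : Set ℝ := {t | t ∈ Icc p T ∧ K t - K' t ≤ 0}
  have hsub : Icc p T ⊆ Icc 0 T := Icc_subset_Icc_left hp.1
  have hcont : ContinuousOn (fun t => K t - K' t) (Icc p T) := (h.1.sub h'.1).mono hsub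
  have hSc : IsClosed S := hcont.preimage_isClosed_of_isClosed isClosed_Icc isClosed_Iic
  have hSne : S.Nonempty := ⟨T, ⟨hp.2, le_rfl⟩, by simp [hT]⟩
  have hSb : BddBelow S := ⟨p, fun t ht => ht.1.1⟩
  obtain ⟨q, hqdef⟩ : ∃ q, q = sInf S := ⟨_, rfl⟩
  have hq : q ∈ S := hqdef ▸ hSc.csInf_mem hSne hSb
  have hlt : ∀ t, p ≤ t → t < q → K' t < K t := by
    intro t h1 h2
    by_contra hh
    push Not at hh
    have : t ∈ S := ⟨⟨h1, h2.le.trans hq.1.2⟩, by linarith⟩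
    have := csInf_le hSb this
    linarith
  have hpq : p < q := by
    rcases eq_or_lt_of_le hq.1.1 with e | e
    · have := hq.2; rw [← e] at this; linarith
    · exact e
  have hge : ∀ t ∈ Ico p q, K p - K' p ≤ K t - K' t := by
    intro t ht
    rcases eq_or_lt_of_le ht.1 with e | e
    · rw [e]
    have htT : t ≤ T := ht.2.le.trans hq.1.2
    have h1 := (h.2.2.2 p t hp.1 e htT).2 fun v hv1 hv2 =>
      ((h'.2.2.1 v ⟨hp.1.trans hv1.le, hv2.trans htT⟩).1).trans_lt
        (hlt v hv1.le (hv2.trans_lt ht.2))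
    have h2 := (h'.2.2.2 p t hp.1 e htT).1 fun v hv1 hv2 =>
      (hlt v hv1.le (hv2.trans_lt ht.2)).trans_le
        ((h.2.2.1 v ⟨hp.1.trans hv1.le, hv2.trans htT⟩).2)
    linarith
  have hcq : ContinuousWithinAt (fun t => K t - K' t) (Ico p q) q :=
    (hcont q hq.1).mono fun t ht => ⟨ht.1, ht.2.le.trans hq.1.2⟩
  have hne : (nhdsWithin q (Ico p q)).NeBot := by
    rw [← mem_closure_iff_nhdsWithin_neBot, closure_Ico hpq.ne]
    exact ⟨hpq.le, le_rfl⟩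
  have := ge_of_tendsto hcq (eventually_nhdsWithin_of_forall hge)
  have := hq.2
  linarith

lemma barrier {T cl cu : ℝ} (hT : 0 < T) (hcl : 0 < cl) {G : ℝ → ℝ → ℝ}
    (h1 : ∀ t ∈ Icc 0 T, ∀ k k', k ≤ k' →
      G t k + cl * (k' - k) ≤ G t k' ∧ G t k' ≤ G t k + cu * (k' - k))
    (h2 : ∀ k, ContinuousOn (fun t => G t k) (Icc 0 T))
    {l : ℝ → ℝ} (hl : ContinuousOn l (Icc 0 T)) :
    ∃ a : ℝ → ℝ, Continuous a ∧ ∀ t ∈ Icc 0 T, G t (a t) = l t := by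
  have hGc : ∀ t ∈ Icc 0 T, Continuous (G t) := by
    intro t ht
    have hL : LipschitzWith (Real.toNNReal cu) (G t) := by
      apply LipschitzWith.of_le_add_mul
      intro x y
      have hcu : cu ≤ (Real.toNNReal cu : ℝ) := Real.le_coe_toNNReal cu
      rw [Real.dist_eq]
      rcases le_total x y with h | h
      · have := (h1 t ht x y h).1
        have h3 : 0 ≤ cl * (y - x) := mul_nonneg hcl.le (by linarith)
        have h4 : 0 ≤ (Real.toNNReal cu : ℝ) * |x - y| := by positivity
        linarith
      · have := (h1 t ht y x h).2
        rw [abs_of_nonneg (by linarith)]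
        have h3 := mul_le_mul_of_nonneg_right hcu (by linarith : 0 ≤ x - y)
        linarith
    exact hL.continuous
  have hsurj : ∀ t, ∃ x, t ∈ Icc 0 T → G t x = l t := by
    intro t
    by_cases ht : t ∈ Icc 0 T
    · have : Function.Surjective (G t) := by
        apply (hGc t ht).surjective
        · apply tendsto_atTop_mono' (f₁ := fun k => G t 0 + cl * k)
          · filter_upwards [eventually_ge_atTop 0] with k hk
            have := (h1 t ht 0 k hk).1
            simpa using this
          · exact tendsto_atTop_add_const_left _ _ (tendsto_id.const_mul_atTop hcl)
        · refine tendsto_atBot_mono' atBot (f₁ := fun k => G t 0 + cl * k) ?_ ?_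
          · filter_upwards [eventually_le_atBot 0] with k hk
            have := (h1 t ht k 0 hk).1
            linarith
          · exact tendsto_atBot_add_const_left _ _ (tendsto_id.const_mul_atBot hcl)
      obtain ⟨x, hx⟩ := this (l t)
      exact ⟨x, fun _ => hx⟩
    · exact ⟨0, fun h => absurd h ht⟩
  choose a ha using hsurj
  have hac : ContinuousOn a (Icc 0 T) := by
    intro t ht
    have key : ∀ s ∈ Icc 0 T, |a s - a t| ≤ |l s - G s (a t)| / cl := by
      intro s hs
      rw [le_div_iff₀ hcl, ← ha s hs]
      rcases le_total (a s) (a t) with h | h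
      · have := (h1 s hs _ _ h).1
        rw [abs_of_nonpos (by linarith)]
        have := neg_le_abs (G s (a s) - G s (a t))
        linarith
      · have := (h1 s hs _ _ h).1
        rw [abs_of_nonneg (by linarith)]
        have := le_abs_self (G s (a s) - G s (a t))
        linarith
    have hlim : Tendsto (fun s => |l s - G s (a t)| / cl) (nhdsWithin t (Icc 0 T)) (nhds 0) := by
      have h3 : ContinuousWithinAt (fun s => |l s - G s (a t)| / cl) (Icc 0 T) t :=
        (((hl t ht).sub (h2 (a t) t ht)).abs).div_const cl
      have h4 := h3.tendsto
      simpa [ha t ht] using h4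
    unfold ContinuousWithinAt
    rw [tendsto_iff_dist_tendsto_zero]
    refine squeeze_zero' (Eventually.of_forall fun _ => dist_nonneg) ?_ hlim
    filter_upwards [self_mem_nhdsWithin] with s hs
    rw [Real.dist_eq]; exact key s hs
  refine ⟨IccExtend hT.le ((Icc 0 T).domRestrict a), hac.domRestrict.Icc_extend', fun t ht => ?_⟩
  rw [IccExtend_of_mem _ _ ht]
  exact ha t ht

section
variable {Ω : Type*} [MeasurableSpace Ω] {Ps : Set (Measure Ω)}

lemma EIntegrable.bddAbove {X : Ω → ℝ} (hX : EIntegrable Ps X) :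
    BddAbove ((fun P => ∫ ω, X ω ∂P) '' Ps) := by
  obtain ⟨-, h2, M, hM⟩ := hX
  refine ⟨M, ?_⟩
  rintro _ ⟨P, hP, rfl⟩
  exact (integral_mono (h2 P hP) (h2 P hP).abs fun ω => le_abs_self _).trans (hM P hP)

lemma EIntegrable.le_sublinE {X : Ω → ℝ} (hX : EIntegrable Ps X) {P : Measure Ω} (hP : P ∈ Ps) :
    ∫ ω, X ω ∂P ≤ sublinE Ps X := le_csSup hX.bddAbove ⟨P, hP, rfl⟩

lemma sublinE_le_add (hPs : Ps.Nonempty) {X Y : Ω → ℝ} (hY : EIntegrable Ps Y) {c : ℝ}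
    (h : ∀ P ∈ Ps, ∫ ω, X ω ∂P ≤ (∫ ω, Y ω ∂P) + c) : sublinE Ps X ≤ sublinE Ps Y + c := by
  apply csSup_le (hPs.image _)
  rintro _ ⟨P, hP, rfl⟩
  linarith [h P hP, hY.le_sublinE hP]

lemma EIntegrable.abs_sub {X Y : Ω → ℝ} (hX : EIntegrable Ps X) (hY : EIntegrable Ps Y) :
    EIntegrable Ps (fun ω => |X ω - Y ω|) := by
  obtain ⟨x1, x2, M, x3⟩ := hX
  obtain ⟨y1, y2, N, y3⟩ := hY
  refine ⟨(x1.sub y1).abs, fun P hP => ((x2 P hP).sub (y2 P hP)).abs, M + N, fun P hP => ?_⟩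
  calc ∫ ω, |(|X ω - Y ω|)| ∂P ≤ ∫ ω, (|X ω| + |Y ω|) ∂P := by
        refine integral_mono ((x2 P hP).sub (y2 P hP)).abs.abs
          ((x2 P hP).abs.add (y2 P hP).abs) fun ω => ?_
        simp only [abs_abs]
        exact _root_.abs_sub (X ω) (Y ω)
    _ = (∫ ω, |X ω| ∂P) + ∫ ω, |Y ω| ∂P := integral_add (x2 P hP).abs (y2 P hP).abs
    _ ≤ M + N := add_le_add (x3 P hP) (y3 P hP)

lemma EIntegrable.loss (hprob : ∀ P ∈ Ps, IsProbabilityMeasure P) {f : Ω → ℝ → ℝ} {Ch : ℝ}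
    (hCh : 0 < Ch)
    (hm : ∀ y, Measurable fun ω => f ω y) (hc : ∀ ω, Continuous (f ω))
    (hg : ∀ ω y, |f ω y| ≤ Ch * (1 + |y|))
    {X : Ω → ℝ} (hX : EIntegrable Ps X) (k : ℝ) :
    EIntegrable Ps (fun ω => f ω (X ω + k)) := by
  obtain ⟨x1, x2, M, x3⟩ := hX
  have hmeas : Measurable (fun ω => f ω (X ω + k)) := by
    have := measurable_uncurry_of_continuous_of_measurable (u := fun y ω => f ω y) hc hm
    exact this.comp ((x1.add_const k).prodMk measurable_id)
  have hbd : ∀ ω, |f ω (X ω + k)| ≤ Ch * (1 + |k|) + Ch * |X ω| := by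
    intro ω
    have h1 := hg ω (X ω + k)
    have h2 := abs_add_le (X ω) k
    nlinarith
  have hint : ∀ P ∈ Ps, Integrable (fun ω => Ch * (1 + |k|) + Ch * |X ω|) P := fun P hP =>
    have := hprob P hP
    (integrable_const _).add ((x2 P hP).abs.const_mul Ch)
  have hint2 : ∀ P ∈ Ps, Integrable (fun ω => f ω (X ω + k)) P := fun P hP =>
    (hint P hP).mono' hmeas.aestronglyMeasurable (Eventually.of_forall hbd)
  refine ⟨hmeas, hint2, Ch * (1 + |k|) + Ch * M, fun P hP => ?_⟩
  have := hprob P hP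
  calc ∫ ω, |f ω (X ω + k)| ∂P ≤ ∫ ω, (Ch * (1 + |k|) + Ch * |X ω|) ∂P :=
        integral_mono (hint2 P hP).abs (hint P hP) hbd
    _ = Ch * (1 + |k|) + Ch * ∫ ω, |X ω| ∂P := by
        rw [integral_add (integrable_const _) ((x2 P hP).abs.const_mul Ch)]
        rw [integral_const_mul (μ := P) Ch (fun ω => |X ω|)]
        simp
    _ ≤ _ := by
        have := mul_le_mul_of_nonneg_left (x3 P hP) hCh.le
        linarith

lemma G_props {T cl cu Ch : ℝ}
    (hPs : Ps.Nonempty) (hprob : ∀ P ∈ Ps, IsProbabilityMeasure P)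
    {l u : ℝ → ℝ} {hb : ℝ → Ω → ℝ → ℝ} (hHr : HrAssumption T cl cu Ch l u hb)
    {Ybar : ℝ → Ω → ℝ} (hYbar : MeanContinuous Ps T Ybar) :
    (∀ t ∈ Icc 0 T, ∀ k k', k ≤ k' →
      sublinE Ps (fun ω => hb t ω (Ybar t ω + k)) + cl * (k' - k)
        ≤ sublinE Ps (fun ω => hb t ω (Ybar t ω + k')) ∧
      sublinE Ps (fun ω => hb t ω (Ybar t ω + k'))
        ≤ sublinE Ps (fun ω => hb t ω (Ybar t ω + k)) + cu * (k' - k)) ∧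
    (∀ k, ContinuousOn (fun t => sublinE Ps (fun ω => hb t ω (Ybar t ω + k))) (Icc 0 T)) := by
  obtain ⟨hcl, hclu, hCh, hlc, huc, -, -, hm, huni, hmono, hgr, hlip⟩ := hHr
  obtain ⟨hY1, hY2⟩ := hYbar
  have hcu : 0 < cu := hcl.trans_le hclu
  have hcont : ∀ t ω, Continuous (hb t ω) := by
    intro t ω
    have : LipschitzWith (Real.toNNReal cu) (hb t ω) := by
      apply LipschitzWith.of_dist_le_mul
      intro x y
      rw [Real.dist_eq, Real.dist_eq, Real.coe_toNNReal _ hcu.le]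
      exact (hlip t ω x y).2
    exact this.continuous
  have hE : ∀ t ∈ Icc 0 T, ∀ s k, EIntegrable Ps (fun ω => hb s ω (Ybar t ω + k)) :=
    fun t ht s k => (hY1 t ht).loss hprob hCh (hm s) (hcont s) (hgr s) k
  refine ⟨?_, ?_⟩
  · intro t ht k k' hkk
    have hpt : ∀ ω, hb t ω (Ybar t ω + k) + cl * (k' - k) ≤ hb t ω (Ybar t ω + k') ∧
        hb t ω (Ybar t ω + k') ≤ hb t ω (Ybar t ω + k) + cu * (k' - k) := by
      intro ω
      have h1 := hlip t ω (Ybar t ω + k') (Ybar t ω + k)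
      have h2 := (hmono t ω).monotone (by linarith : Ybar t ω + k ≤ Ybar t ω + k')
      rw [abs_of_nonneg (sub_nonneg.2 h2),
        abs_of_nonneg (by linarith : 0 ≤ Ybar t ω + k' - (Ybar t ω + k))] at h1
      constructor <;> linarith [h1.1, h1.2]
    constructor
    · have := sublinE_le_add hPs (X := fun ω => hb t ω (Ybar t ω + k)) (hE t ht t k')
        (c := -(cl * (k' - k))) (fun P hP => by
          have := hprob P hP
          have h3 := integral_mono (((hE t ht t k).2.1 P hP).add
            (integrable_const (cl * (k' - k)))) ((hE t ht t k').2.1 P hP) fun ω => (hpt ω).1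
          simp only [Pi.add_apply] at h3
          rw [integral_add ((hE t ht t k).2.1 P hP) (integrable_const _)] at h3
          simp at h3
          linarith)
      linarith
    · exact sublinE_le_add hPs (X := fun ω => hb t ω (Ybar t ω + k')) (hE t ht t k)
        (fun P hP => by
          have := hprob P hP
          have h3 := integral_mono ((hE t ht t k').2.1 P hP) (((hE t ht t k).2.1 P hP).add
            (integrable_const (cu * (k' - k)))) fun ω => (hpt ω).2
          simp only [Pi.add_apply] at h3
          rw [integral_add ((hE t ht t k).2.1 P hP) (integrable_const _)] at h3
          simpa using h3)
  · intro k t ht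
    rw [Metric.continuousWithinAt_iff']
    intro ε hε
    obtain ⟨δ, hδ, huni⟩ := huni (ε / 3) (by linarith)
    have hev : ∀ᶠ s in nhdsWithin t (Icc 0 T),
        sublinE Ps (fun ω => |Ybar s ω - Ybar t ω|) < ε / (3 * cu) :=
      (hY2 t ht).eventually_lt_const (by positivity)
    have hev2 : ∀ᶠ s in nhdsWithin t (Icc 0 T), |s - t| < δ :=
      nhdsWithin_le_nhds (Metric.ball_mem_nhds t hδ)
    filter_upwards [hev, hev2, self_mem_nhdsWithin] with s h1 h2 hs
    have hD := (hY1 s hs).abs_sub (hY1 t ht)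
    have hpt : ∀ ω, |hb s ω (Ybar s ω + k) - hb t ω (Ybar t ω + k)|
        ≤ ε / 3 + cu * |Ybar s ω - Ybar t ω| := by
      intro ω
      have e1 := (hlip s ω (Ybar s ω + k) (Ybar t ω + k)).2
      have e2 := huni ω s t (Ybar t ω + k) (Ybar t ω + k) (by simpa using h2)
      have e3 := abs_sub_le (hb s ω (Ybar s ω + k)) (hb s ω (Ybar t ω + k))
        (hb t ω (Ybar t ω + k))
      rw [add_sub_add_right_eq_sub] at e1
      linarith
    have hI : ∀ P ∈ Ps, |(∫ ω, hb s ω (Ybar s ω + k) ∂P) - ∫ ω, hb t ω (Ybar t ω + k) ∂P|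
        ≤ ε / 3 + ε / 3 := by
      intro P hP
      have := hprob P hP
      rw [← integral_sub ((hE s hs s k).2.1 P hP) ((hE t ht t k).2.1 P hP)]
      have e1 : ∫ ω, |hb s ω (Ybar s ω + k) - hb t ω (Ybar t ω + k)| ∂P
          ≤ ∫ ω, (ε / 3 + cu * |Ybar s ω - Ybar t ω|) ∂P :=
        integral_mono (((hE s hs s k).2.1 P hP).sub ((hE t ht t k).2.1 P hP)).abs
          ((integrable_const _).add ((hD.2.1 P hP).const_mul cu)) hpt
      rw [integral_add (integrable_const _) ((hD.2.1 P hP).const_mul cu),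
        integral_const_mul] at e1
      have e2 := hD.le_sublinE hP
      have e3 : cu * ∫ ω, |Ybar s ω - Ybar t ω| ∂P ≤ cu * (ε / (3 * cu)) :=
        mul_le_mul_of_nonneg_left (e2.trans h1.le) hcu.le
      have e4 : cu * (ε / (3 * cu)) = ε / 3 := by field_simp
      have e5 := abs_integral_le_integral_abs (μ := P)
        (f := fun ω => hb s ω (Ybar s ω + k) - hb t ω (Ybar t ω + k))
      simp at e1
      linarith
    have c1 := sublinE_le_add hPs (X := fun ω => hb s ω (Ybar s ω + k)) (hE t ht t k)
      (c := ε / 3 + ε / 3) (fun P hP => by linarith [(abs_le.1 (hI P hP)).2])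
    have c2 := sublinE_le_add hPs (X := fun ω => hb t ω (Ybar t ω + k)) (hE s hs s k)
      (c := ε / 3 + ε / 3) (fun P hP => by linarith [(abs_le.1 (hI P hP)).1])
    rw [Real.dist_eq, abs_lt]
    constructor <;> linarith

end

/-- existence and uniqueness of the solution of the backward Skorokhod problem
with sublinear expectation: there is exactly one continuous `R` of bounded variation with
`R 0 = 0` such that, setting `Y_t := Ȳ_t + R_T − R_t`, the barrier constraint and the
minimality condition hold. -/
theorem stmt6 {Ω : Type*} [MeasurableSpace Ω] (T cl cu Ch : ℝ) (hT : 0 < T)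
    (Ps : Set (Measure Ω)) (hPs : Ps.Nonempty) (hprob : ∀ P ∈ Ps, IsProbabilityMeasure P)
    (l u : ℝ → ℝ) (hb : ℝ → Ω → ℝ → ℝ) (hHr : HrAssumption T cl cu Ch l u hb)
    (Ybar : ℝ → Ω → ℝ) (hYbar : MeanContinuous Ps T Ybar)
    (htermL : l T ≤ sublinE Ps fun ω => hb T ω (Ybar T ω))
    (htermU : (sublinE Ps fun ω => hb T ω (Ybar T ω)) ≤ u T) :
    ∃ R : ℝ → ℝ,
      IsBSPsol Ps T hb l u Ybar (fun t ω => Ybar t ω + R T - R t) R ∧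
      ∀ R' : ℝ → ℝ,
        IsBSPsol Ps T hb l u Ybar (fun t ω => Ybar t ω + R' T - R' t) R' →
        ∀ t ∈ Icc (0:ℝ) T, R' t = R t := by
  obtain ⟨hG1, hG2⟩ := G_props hPs hprob hHr hYbar
  obtain ⟨hcl, hclu, hCh, hlc, huc, -, ⟨ε, hε, hgap⟩, -⟩ := hHr
  obtain ⟨G, hG⟩ : ∃ G : ℝ → ℝ → ℝ,
    G = fun t k => sublinE Ps (fun ω => hb t ω (Ybar t ω + k)) := ⟨_, rfl⟩
  have hGe : ∀ (R : ℝ → ℝ) t, sublinE Ps (fun ω => hb t ω (Ybar t ω + R T - R t))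
      = G t (R T - R t) := by
    intro R t
    simp only [hG, add_sub_assoc]
  have hG1' : ∀ t ∈ Icc 0 T, ∀ k k', k ≤ k' →
      G t k + cl * (k' - k) ≤ G t k' ∧ G t k' ≤ G t k + cu * (k' - k) := by
    rw [hG]; exact hG1
  have hG2' : ∀ k, ContinuousOn (fun t => G t k) (Icc 0 T) := by
    rw [hG]; exact hG2
  have hmono : ∀ t ∈ Icc 0 T, StrictMono (G t) := by
    intro t ht k k' hk
    have h1 := (hG1' t ht k k' hk.le).1
    have h2 : 0 < cl * (k' - k) := mul_pos hcl (by linarith)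
    linarith
  obtain ⟨a, hac, ha⟩ := barrier hT hcl hG1' hG2' hlc
  obtain ⟨b, hbc, hb'⟩ := barrier hT hcl hG1' hG2' huc
  have hab : ∀ t ∈ Icc 0 T, a t < b t := by
    intro t ht
    rw [← (hmono t ht).lt_iff_lt, ha t ht, hb' t ht]
    linarith [hgap t ht]
  have hTm : T ∈ Icc 0 T := ⟨hT.le, le_rfl⟩
  have hk0 : a T ≤ 0 ∧ 0 ≤ b T := by
    rw [← (hmono T hTm).le_iff_le, ha T hTm, ← (hmono T hTm).le_iff_le (b := b T), hb' T hTm]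
    simp only [hG, add_zero]
    exact ⟨htermL, htermU⟩
  have hsol_iff : ∀ R : ℝ → ℝ,
      IsBSPsol Ps T hb l u Ybar (fun t ω => Ybar t ω + R T - R t) R ↔
        DetSol a b (fun t => R T - R t) 0 T ∧ R 0 = 0 := by
    intro R
    unfold IsBSPsol DetSol MinimalityIncr
    simp only [hGe]
    constructor
    · rintro ⟨-, h2, h3, h4, h5, h6⟩
      refine ⟨⟨continuousOn_const.sub h3, bv_const_sub _ h4, ?_, ?_⟩, h5⟩
      · intro t ht
        rw [← (hmono t ht).le_iff_le, ha t ht, ← (hmono t ht).le_iff_le (b := b t), hb' t ht]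
        exact h2 t ht
      · intro p q hp hpq hq
        have h7 := h6 p q hp hpq hq
        constructor
        · intro h
          have := h7.1 fun v hv1 hv2 => by
            have hv : v ∈ Icc 0 T := ⟨hp.trans hv1.le, hv2.trans hq⟩
            rw [← hb' v hv]
            exact hmono v hv (h v hv1 hv2)
          linarith
        · intro h
          have := h7.2 fun v hv1 hv2 => by
            have hv : v ∈ Icc 0 T := ⟨hp.trans hv1.le, hv2.trans hq⟩
            rw [← ha v hv]
            exact hmono v hv (h v hv1 hv2)
          linarith
    · rintro ⟨⟨h3, h4, h2, h6⟩, h5⟩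
      refine ⟨by simp, ?_, ?_, ?_, h5, ?_⟩
      · intro t ht
        rw [← ha t ht, ← hb' t ht, (hmono t ht).le_iff_le, (hmono t ht).le_iff_le]
        exact h2 t ht
      · have := (continuousOn_const (c := R T)).sub h3
        refine this.congr fun t _ => ?_
        simp
      · have := bv_const_sub (R T) h4
        simpa using this
      · intro p q hp hpq hq
        have h7 := h6 p q hp hpq hq
        constructor
        · intro h
          have := h7.1 fun v hv1 hv2 => by
            have hv : v ∈ Icc 0 T := ⟨hp.trans hv1.le, hv2.trans hq⟩
            rw [← (hmono v hv).lt_iff_lt, hb' v hv]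
            exact h v hv1 hv2
          linarith
        · intro h
          have := h7.2 fun v hv1 hv2 => by
            have hv : v ∈ Icc 0 T := ⟨hp.trans hv1.le, hv2.trans hq⟩
            rw [← (hmono v hv).lt_iff_lt, ha v hv]
            exact h v hv1 hv2
          linarith
  obtain ⟨K, hK, hKT⟩ := det_exists hT hac hbc hab hk0
  refine ⟨fun t => K 0 - K t, ?_, ?_⟩
  · refine (hsol_iff (fun t => K 0 - K t)).2 ?_
    simp only [hKT, sub_self, and_true]
    have : (fun t => K 0 - 0 - (K 0 - K t)) = K := by
      funext t; ring
    rw [this]; exact hK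
  · intro R' hR' t ht
    obtain ⟨hR1, hR2⟩ := (hsol_iff R').1 hR'
    have heq : ∀ s ∈ Icc 0 T, R' T - R' s = K s := fun s hs =>
      le_antisymm (det_le hR1 hK (by simp [hKT]) s hs) (det_le hK hR1 (by simp [hKT]) s hs)
    have e1 := heq t ht
    have e2 := heq 0 ⟨le_rfl, hT.le⟩
    rw [hR2] at e2
    linarith
end

section
/- For every s ∈ [0,T] and all Ê-integrable X, X′: |L^1_s(X) − L^2_s(X′)| ≤ (2c̄/c̲) Ê[|X − X′|] + (1/c̲) ( |H̄^1(s, L^1_s(X′), X′) − H̄^2(s, L^1_s(X′), X′)| + |l^1_s − l^2_s| ), and analogously |U^1_s(X) − U^2_s(X′)| ≤ (2c̄/c̲) Ê[|X − X′|] + (1/c̲) ( |H̄^1(s, U^1_s(X′), X′) − H̄^2(s, U^1_s(X′), X′)| + |u^1_s − u^2_s| ). -/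
open MeasureTheory Set Filter

lemma aux_le {Ω : Type*} [MeasurableSpace Ω] {Ps : Set (Measure Ω)} {f : Ω → ℝ}
    (hf : EIntegrable Ps f) {P : Measure Ω} (hP : P ∈ Ps) : ∫ ω, f ω ∂P ≤ sublinE Ps f := by
  obtain ⟨-, hi, M, hM⟩ := hf
  refine le_csSup ⟨M, ?_⟩ ⟨P, hP, rfl⟩
  rintro _ ⟨Q, hQ, rfl⟩
  exact (integral_mono (hi Q hQ) (hi Q hQ).abs fun ω => le_abs_self _).trans (hM Q hQ)

lemma aux_sub {Ω : Type*} [MeasurableSpace Ω] {Ps : Set (Measure Ω)} (hPs : Ps.Nonempty)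
    (hprob : ∀ P ∈ Ps, IsProbabilityMeasure P) {f g h : Ω → ℝ} (k c : ℝ) (hk : 0 ≤ k)
    (hf : EIntegrable Ps f) (hg : EIntegrable Ps g) (hh : EIntegrable Ps h)
    (hle : ∀ ω, f ω ≤ g ω + (k * h ω + c)) :
    sublinE Ps f ≤ sublinE Ps g + (k * sublinE Ps h + c) := by
  refine csSup_le (hPs.image _) ?_
  rintro _ ⟨P, hP, rfl⟩
  have := hprob P hP
  have ig := hg.2.1 P hP
  have ih := (hh.2.1 P hP).const_mul k
  have ic : Integrable (fun _ : Ω => c) P := integrable_const c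
  have h1 : ∫ ω, f ω ∂P ≤ ∫ ω, (g ω + (k * h ω + c)) ∂P :=
    integral_mono (hf.2.1 P hP) (ig.add (ih.add ic)) hle
  have h3 : ∫ ω, (k * h ω + c) ∂P = ∫ ω, k * h ω ∂P + ∫ _ω, c ∂P := integral_add ih ic
  have h2 : ∫ ω, (g ω + (k * h ω + c)) ∂P = ∫ ω, g ω ∂P + ∫ ω, (k * h ω + c) ∂P :=
    integral_add ig (ih.add ic)
  have h4 : ∫ ω, k * h ω ∂P = k * ∫ ω, h ω ∂P := integral_const_mul _ _
  have h5 : ∫ _ω : Ω, c ∂P = c := by simp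
  have h6 := aux_le hg hP
  have h7 := mul_le_mul_of_nonneg_left (aux_le hh hP) hk
  show ∫ ω, f ω ∂P ≤ _
  linarith

lemma aux_bdd {Ω : Type*} [MeasurableSpace Ω] {Ps : Set (Measure Ω)}
    (hprob : ∀ P ∈ Ps, IsProbabilityMeasure P) {f X : Ω → ℝ} (k c : ℝ) (hk : 0 ≤ k)
    (hX : EIntegrable Ps X) (hf : Measurable f) (hle : ∀ ω, |f ω| ≤ k * |X ω| + c) :
    EIntegrable Ps f := by
  obtain ⟨-, hi, M, hM⟩ := hX
  have ib : ∀ P ∈ Ps, Integrable (fun ω => k * |X ω| + c) P := fun P hP => by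
    have := hprob P hP
    exact ((hi P hP).abs.const_mul k).add (integrable_const c)
  have hif : ∀ P ∈ Ps, Integrable f P := fun P hP =>
    (ib P hP).mono' hf.aestronglyMeasurable (Eventually.of_forall hle)
  refine ⟨hf, hif, k * M + c, fun P hP => ?_⟩
  have := hprob P hP
  have h1 : ∫ ω, |f ω| ∂P ≤ ∫ ω, (k * |X ω| + c) ∂P :=
    integral_mono (hif P hP).abs (ib P hP) hle
  have h2 : ∫ ω, (k * |X ω| + c) ∂P = k * ∫ ω, |X ω| ∂P + c := by
    rw [integral_add ((hi P hP).abs.const_mul k) (integrable_const c), integral_const_mul]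
    simp
  have := mul_le_mul_of_nonneg_left (hM P hP) hk
  linarith

lemma aux_diff {Ω : Type*} [MeasurableSpace Ω] {Ps : Set (Measure Ω)}
    {X X' : Ω → ℝ} (hX : EIntegrable Ps X) (hX' : EIntegrable Ps X') :
    EIntegrable Ps (fun ω => |X ω - X' ω|) := by
  obtain ⟨hm, hi, M, hM⟩ := hX
  obtain ⟨hm', hi', M', hM'⟩ := hX'
  have hd : ∀ P ∈ Ps, Integrable (fun ω => |X ω - X' ω|) P := fun P hP =>
    ((hi P hP).sub (hi' P hP)).abs
  refine ⟨by simpa using (hm.sub hm').norm, hd, M + M', fun P hP => ?_⟩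
  have h1 : ∫ ω, |(|X ω - X' ω|)| ∂P ≤ ∫ ω, (|X ω| + |X' ω|) ∂P :=
    integral_mono (hd P hP).abs ((hi P hP).abs.add (hi' P hP).abs) fun ω => by
      simpa using abs_sub (X ω) (X' ω)
  rw [integral_add (hi P hP).abs (hi' P hP).abs] at h1
  linarith [hM P hP, hM' P hP]

lemma aux_hb {Ω : Type*} [MeasurableSpace Ω] {Ps : Set (Measure Ω)}
    (hprob : ∀ P ∈ Ps, IsProbabilityMeasure P) {T cl cu Ch : ℝ} {l u : ℝ → ℝ}
    {hb : ℝ → Ω → ℝ → ℝ} (H : HrAssumption T cl cu Ch l u hb) (t x e : ℝ) {X : Ω → ℝ}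
    (hX : EIntegrable Ps X) : EIntegrable Ps (fun ω => hb t ω (x + X ω - e)) := by
  obtain ⟨hcl, hclu, hCh, -, -, -, -, hmeas, -, hmono, hgr, hlip⟩ := H
  refine aux_bdd hprob Ch (Ch * (1 + |x - e|)) hCh.le hX ?_ fun ω => ?_
  · have hc : ∀ ω, Continuous (hb t ω) := fun ω => by
      refine (LipschitzWith.of_dist_le_mul (K := cu.toNNReal) fun y y' => ?_).continuous
      rw [Real.dist_eq, Real.dist_eq, Real.coe_toNNReal _ (hcl.le.trans hclu)]
      exact (hlip t ω y y').2
    have := measurable_uncurry_of_continuous_of_measurable (u := fun y ω => hb t ω y) hc (hmeas t)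
    exact this.comp (((hX.1.const_add x).sub_const e).prodMk measurable_id)
  · refine (hgr t ω _).trans ?_
    have : |x + X ω - e| ≤ |X ω| + |x - e| := by
      have := abs_add_le (X ω) (x - e)
      rwa [show X ω + (x - e) = x + X ω - e by ring] at this
    nlinarith

lemma aux_low {Ω : Type*} [MeasurableSpace Ω] {Ps : Set (Measure Ω)} (hPs : Ps.Nonempty)
    (hprob : ∀ P ∈ Ps, IsProbabilityMeasure P) {T cl cu Ch : ℝ} {l u : ℝ → ℝ}
    {hb : ℝ → Ω → ℝ → ℝ} (H : HrAssumption T cl cu Ch l u hb) (t a b : ℝ) {X : Ω → ℝ}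
    (hX : EIntegrable Ps X) : cl * |a - b| ≤ |Hbar Ps hb t a X - Hbar Ps hb t b X| := by
  wlog hab : a ≤ b generalizing a b
  · rw [abs_sub_comm a, abs_sub_comm (Hbar Ps hb t a X)]
    exact this b a (le_of_not_ge hab)
  have h := aux_sub hPs hprob 0 (-(cl * (b - a))) le_rfl
    (aux_hb hprob H t a (sublinE Ps X) hX) (aux_hb hprob H t b (sublinE Ps X) hX) hX (fun ω => by
      obtain ⟨-, -, -, -, -, -, -, -, -, hmono, -, hlip⟩ := H
      have h1 := (hlip t ω (b + X ω - sublinE Ps X) (a + X ω - sublinE Ps X)).1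
      have h2 := (hmono t ω).monotone
        (show a + X ω - sublinE Ps X ≤ b + X ω - sublinE Ps X by linarith)
      rw [abs_of_nonneg (sub_nonneg.2 h2),
        show b + X ω - sublinE Ps X - (a + X ω - sublinE Ps X) = b - a by ring,
        abs_of_nonneg (sub_nonneg.2 hab)] at h1
      linarith)
  rw [abs_sub_comm a, abs_of_nonneg (sub_nonneg.2 hab), abs_sub_comm]
  refine le_trans ?_ (le_abs_self _)
  unfold Hbar
  linarith

lemma aux_up {Ω : Type*} [MeasurableSpace Ω] {Ps : Set (Measure Ω)} (hPs : Ps.Nonempty)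
    (hprob : ∀ P ∈ Ps, IsProbabilityMeasure P) {T cl cu Ch : ℝ} {l u : ℝ → ℝ}
    {hb : ℝ → Ω → ℝ → ℝ} (H : HrAssumption T cl cu Ch l u hb) (t a : ℝ) {X X' : Ω → ℝ}
    (hX : EIntegrable Ps X) (hX' : EIntegrable Ps X') :
    Hbar Ps hb t a X - Hbar Ps hb t a X' ≤ 2 * cu * sublinE Ps (fun ω => |X ω - X' ω|) := by
  have hD := aux_diff hX hX'
  have hcu : 0 ≤ cu := H.1.le.trans H.2.1
  have e1 := aux_sub hPs hprob 1 0 zero_le_one hX hX' hD (fun ω => by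
    linarith [le_abs_self (X ω - X' ω)])
  have e2 := aux_sub hPs hprob 1 0 zero_le_one hX' hX hD (fun ω => by
    linarith [neg_abs_le (X ω - X' ω)])
  have h := aux_sub hPs hprob cu (cu * sublinE Ps (fun ω => |X ω - X' ω|)) hcu
    (aux_hb hprob H t a (sublinE Ps X) hX) (aux_hb hprob H t a (sublinE Ps X') hX') hD
    (fun ω => by
      obtain ⟨-, -, -, -, -, -, -, -, -, hmono, -, hlip⟩ := H
      have h1 := (le_abs_self _).trans
        (hlip t ω (a + X ω - sublinE Ps X) (a + X' ω - sublinE Ps X')).2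
      have h2 : |a + X ω - sublinE Ps X - (a + X' ω - sublinE Ps X')| ≤
          |X ω - X' ω| + sublinE Ps (fun ω => |X ω - X' ω|) := by
        rw [abs_le]
        constructor <;> linarith [le_abs_self (X ω - X' ω), neg_abs_le (X ω - X' ω)]
      have h3 := mul_le_mul_of_nonneg_left h2 hcu
      linarith)
  unfold Hbar
  linarith

lemma aux_main {Ω : Type*} [MeasurableSpace Ω] {T cl cu Ch : ℝ}
    {Ps : Set (Measure Ω)} (hPs : Ps.Nonempty) (hprob : ∀ P ∈ Ps, IsProbabilityMeasure P)
    {l1 u1 l2 u2 : ℝ → ℝ} {hb1 hb2 : ℝ → Ω → ℝ → ℝ}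
    (hHr1 : HrAssumption T cl cu Ch l1 u1 hb1) (hHr2 : HrAssumption T cl cu Ch l2 u2 hb2)
    (s a a' b p q : ℝ) {X X' : Ω → ℝ} (hX : EIntegrable Ps X) (hX' : EIntegrable Ps X')
    (ha : Hbar Ps hb1 s a X = p) (ha' : Hbar Ps hb1 s a' X' = p)
    (hb : Hbar Ps hb2 s b X' = q) :
    |a - b| ≤ (2 * cu / cl) * sublinE Ps (fun ω => |X ω - X' ω|) +
        (1 / cl) * (|Hbar Ps hb1 s a' X' - Hbar Ps hb2 s a' X'| + |p - q|) := by
  have hcl := hHr1.1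
  have h1 := aux_low hPs hprob hHr1 s a a' hX
  have h2 := aux_low hPs hprob hHr2 s a' b hX'
  have h3 := aux_up hPs hprob hHr1 s a' hX hX'
  have h4 := aux_up hPs hprob hHr1 s a' hX' hX
  have h5 : (fun ω => |X' ω - X ω|) = fun ω => |X ω - X' ω| := by
    funext ω; exact abs_sub_comm _ _
  rw [h5] at h4
  have h6 : |Hbar Ps hb1 s a X - Hbar Ps hb1 s a' X| ≤
      2 * cu * sublinE Ps (fun ω => |X ω - X' ω|) := by
    rw [ha, ← ha', abs_le]; constructor <;> linarith
  have h7 : |Hbar Ps hb2 s a' X' - Hbar Ps hb2 s b X'| ≤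
      |Hbar Ps hb1 s a' X' - Hbar Ps hb2 s a' X'| + |p - q| := by
    rw [hb, ha', abs_sub_comm p]
    have := abs_add_le (Hbar Ps hb2 s a' X' - p) (p - q)
    rwa [show Hbar Ps hb2 s a' X' - p + (p - q) = Hbar Ps hb2 s a' X' - q by ring] at this
  have h8 := abs_sub_le a a' b
  have h9 := mul_le_mul_of_nonneg_left h8 hcl.le
  rw [show ∀ x y : ℝ, 2 * cu / cl * x + 1 / cl * y = (2 * cu * x + y) / cl from
    fun x y => by ring, le_div_iff₀ hcl]
  linarith

/-- comparison of the operators `L¹, L²` (resp. `U¹, U²`) associated with two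
data sets `(hb¹, l¹, u¹)`, `(hb², l², u²)` satisfying (H_r) with the same constants. -/
theorem stmt10 {Ω : Type*} [MeasurableSpace Ω] (T cl cu Ch : ℝ) (hT : 0 < T)
    (Ps : Set (Measure Ω)) (hPs : Ps.Nonempty) (hprob : ∀ P ∈ Ps, IsProbabilityMeasure P)
    (l1 u1 l2 u2 : ℝ → ℝ) (hb1 hb2 : ℝ → Ω → ℝ → ℝ)
    (hHr1 : HrAssumption T cl cu Ch l1 u1 hb1) (hHr2 : HrAssumption T cl cu Ch l2 u2 hb2)
    (L1 U1 L2 U2 : ℝ → (Ω → ℝ) → ℝ)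
    (hL1 : ∀ t ∈ Icc (0:ℝ) T, ∀ X : Ω → ℝ, EIntegrable Ps X → Hbar Ps hb1 t (L1 t X) X = l1 t)
    (hU1 : ∀ t ∈ Icc (0:ℝ) T, ∀ X : Ω → ℝ, EIntegrable Ps X → Hbar Ps hb1 t (U1 t X) X = u1 t)
    (hL2 : ∀ t ∈ Icc (0:ℝ) T, ∀ X : Ω → ℝ, EIntegrable Ps X → Hbar Ps hb2 t (L2 t X) X = l2 t)
    (hU2 : ∀ t ∈ Icc (0:ℝ) T, ∀ X : Ω → ℝ, EIntegrable Ps X → Hbar Ps hb2 t (U2 t X) X = u2 t)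
    (s : ℝ) (hs : s ∈ Icc (0:ℝ) T)
    (X X' : Ω → ℝ) (hX : EIntegrable Ps X) (hX' : EIntegrable Ps X') :
    |L1 s X - L2 s X'| ≤
      (2 * cu / cl) * sublinE Ps (fun ω => |X ω - X' ω|) +
        (1 / cl) * (|Hbar Ps hb1 s (L1 s X') X' - Hbar Ps hb2 s (L1 s X') X'| +
          |l1 s - l2 s|) ∧
    |U1 s X - U2 s X'| ≤
      (2 * cu / cl) * sublinE Ps (fun ω => |X ω - X' ω|) +
        (1 / cl) * (|Hbar Ps hb1 s (U1 s X') X' - Hbar Ps hb2 s (U1 s X') X'| +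
          |u1 s - u2 s|) := by
  exact ⟨aux_main hPs hprob hHr1 hHr2 s _ _ _ _ _ hX hX' (hL1 s hs X hX) (hL1 s hs X' hX')
      (hL2 s hs X' hX'),
    aux_main hPs hprob hHr1 hHr2 s _ _ _ _ _ hX hX' (hU1 s hs X hX) (hU1 s hs X' hX')
      (hU2 s hs X' hX')⟩
end
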